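/- Let n = p^ℓ m with p prime and ℓ ≥ 1, m ≥ 2 integers. A connected non-complete circulant graph Cay(ℤ_n, S) of degree p^ℓ − 1 admits a perfect code if and only if p^ℓ divides n and S_0 is a pyramidal set of ℤ_n. -/

import Mathlib

open Pointwise

/-- Image of a subset `X ⊆ G` in the quotient `G ⧸ H` (denoted `X/H` in the paper). -/
def ImageSet {G : Type*} [AddCommGroup G] (H : AddSubgroup G) (X : Set G) :
    Set (G ⧸ H) :=
  (QuotientAddGroup.mk : G → G ⧸ H) '' X

/-- `X` is periodic under every element of `P` (i.e. `X + h = X` for all `h ∈ P`). -/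
def PeriodicUnder {A : Type*} [Add A] (X P : Set A) : Prop :=
  ∀ h ∈ P, (fun x => x + h) '' X = X

/-- `X` is aperiodic: its only period is `0`. -/
def APeriodic {A : Type*} [AddGroup A] (X : Set A) : Prop :=
  ∀ g : A, (fun x => x + g) '' X = X → g = 0

/-- The subgroup series `H 0 < H 1 < ⋯ < H (2t-1) ≤ H (2t) = G` is an admissible
subgroup series associated with `X`, in the sense of Definition 1.1 of the paper:
either `H 0 = ⊥` and `X` is aperiodic, or `H 0 ≠ ⊥` and `X` is `H 0`-periodic, and
conditions (T1), (T2), (T3) hold (stated directly in `G` via the canonical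
identifications of iterated quotients). -/
def IsAdmissibleSeries {G : Type*} [AddCommGroup G] (X : Set G) (t : ℕ)
    (H : ℕ → AddSubgroup G) : Prop :=
  1 ≤ t ∧
  (∀ i, i + 1 ≤ 2 * t - 1 → H i < H (i + 1)) ∧
  H (2 * t - 1) ≤ H (2 * t) ∧ H (2 * t) = ⊤ ∧
  ((H 0 = ⊥ ∧ APeriodic X) ∨ (H 0 ≠ ⊥ ∧ PeriodicUnder X ((H 0 : Set G)))) ∧
  (∀ i < t, (ImageSet (H (2 * i)) X - ImageSet (H (2 * i)) X) ∩
      ImageSet (H (2 * i)) ((H (2 * i + 1) : Set G)) = {0}) ∧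
  (∀ i, 1 ≤ i → i ≤ t →
      PeriodicUnder (ImageSet (H (2 * i - 1)) X)
        (ImageSet (H (2 * i - 1)) ((H (2 * i) : Set G)))) ∧
  (ImageSet (H (2 * t - 1)) X).ncard = Nat.card (G ⧸ H (2 * t - 1)) ∧
  (∀ i < t, (ImageSet (H (2 * i)) X).ncard = (ImageSet (H (2 * i + 1)) X).ncard)

/-- `X` is a pyramidal set of `G`. -/
def IsPyramidal {G : Type*} [AddCommGroup G] (X : Set G) : Prop :=
  0 ∈ X ∧ ∃ (t : ℕ) (H : ℕ → AddSubgroup G), IsAdmissibleSeries X t H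

/-- `D` is a perfect code in `Cay(ℤ_n, S)` iff every element of `ℤ_n` has a unique
representation `s + d` with `s ∈ S₀ = S ∪ {0}` and `d ∈ D`. -/
def IsCayleyPerfectCode {n : ℕ} (S0 D : Set (ZMod n)) : Prop :=
  ∀ g : ZMod n, ∃! sd : ZMod n × ZMod n, sd.1 ∈ S0 ∧ sd.2 ∈ D ∧ sd.1 + sd.2 = g


/-- `X/A → X/B` is injective. -/
def PInj {G : Type*} [AddCommGroup G] (X : Set G) (A B : AddSubgroup G) : Prop :=
  ∀ x ∈ X, ∀ y ∈ X, x - y ∈ B → x - y ∈ A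

/-- `X/A` is `B/A`-periodic. -/
def PPer {G : Type*} [AddCommGroup G] (X : Set G) (A B : AddSubgroup G) : Prop :=
  ∀ x ∈ X, ∀ h ∈ B, ∃ y ∈ X, x + h - y ∈ A

/-- Existence of a series starting at `L`. -/
def PSer {G : Type*} [AddCommGroup G] (X : Set G) (L : AddSubgroup G) : Prop :=
  ∃ (t : ℕ) (H : ℕ → AddSubgroup G), 1 ≤ t ∧ H 0 = L ∧
    (∀ i, i + 1 ≤ 2 * t - 1 → H i < H (i + 1)) ∧ H (2 * t - 1) ≤ H (2 * t) ∧ H (2 * t) = ⊤ ∧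
    (∀ i < t, PInj X (H (2 * i)) (H (2 * i + 1))) ∧
    (∀ i < t, PPer X (H (2 * i + 1)) (H (2 * i + 2)))

/-- Existence of a series starting with a periodic step. -/
def PSerB {G : Type*} [AddCommGroup G] (X : Set G) (L : AddSubgroup G) : Prop :=
  ∃ M, L ≤ M ∧ PPer X L M ∧ (M = ⊤ ∨ (L < M ∧ PSer X M))

section series
variable {G : Type*} [AddCommGroup G] {X : Set G} {L L' M : AddSubgroup G}

theorem PInj.trans (h1 : PInj X L L') (h2 : PInj X L' M) : PInj X L M :=
  fun x hx y hy h => h1 x hx y hy (h2 x hx y hy h)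

theorem PPer.trans (h1 : PPer X L L') (h2 : PPer X L' M) : PPer X L M := by
  intro x hx h hh
  obtain ⟨y, hy, hy'⟩ := h2 x hx h hh
  obtain ⟨z, hz, hz'⟩ := h1 y hy _ hy'
  exact ⟨z, hz, by convert hz' using 1; abel⟩

theorem PSer.of_B (hlt : L < L') (h1 : PInj X L L') (h2 : PSerB X L') : PSer X L := by
  obtain ⟨M, hM, hper, rfl | ⟨hlt', t, H, ht, rfl, hs, hle, htop, hi, hp⟩⟩ := h2
  · refine ⟨1, fun i => if i = 0 then L else if i = 1 then L' else ⊤, le_rfl, by simp, ?_, by simp,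
      by simp, ?_, ?_⟩
    · intro i hi
      have : i = 0 := by omega
      subst this; simpa using hlt
    · intro i hi
      have : i = 0 := by omega
      subst this; simpa using h1
    · intro i hi
      have : i = 0 := by omega
      subst this; simpa using hper
  · refine ⟨t + 1, fun i => if i = 0 then L else if i = 1 then L' else H (i - 2), by omega, by simp,
      ?_, ?_, ?_, ?_, ?_⟩
    · intro i hi
      rcases i with _ | _ | i
      · simpa using hlt
      · simpa using hlt'
      · simpa using hs i (by omega)
    · obtain ⟨s, rfl⟩ : ∃ s, t = s + 1 := ⟨t - 1, by omega⟩
      simpa [mul_add] using hle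
    · obtain ⟨s, rfl⟩ : ∃ s, t = s + 1 := ⟨t - 1, by omega⟩
      simpa [mul_add] using htop
    · intro i hi'
      rcases i with _ | i
      · simpa using h1
      · simpa [mul_add] using hi i (by omega)
    · intro i hi'
      rcases i with _ | i
      · simpa using hper
      · simpa [mul_add] using hp i (by omega)

theorem PSer.of_inj (hlt : L ≤ L') (h1 : PInj X L L') (h2 : PSer X L') : PSer X L := by
  obtain ⟨t, H, ht, rfl, hs, hle, htop, hi, hp⟩ := h2
  refine ⟨t, fun i => if i = 0 then L else H i, ht, by simp, ?_, ?_, ?_, ?_, ?_⟩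
  · intro i hi
    rcases i with _ | i
    · simpa using lt_of_le_of_lt hlt (hs 0 hi)
    · simpa using hs _ hi
  · have h1 : 2 * t - 1 ≠ 0 := by omega
    have h2 : 2 * t ≠ 0 := by omega
    simpa only [h1, h2, if_false] using hle
  · have h2 : 2 * t ≠ 0 := by omega
    simpa only [h2, if_false] using htop
  · intro i hi'
    rcases i with _ | i
    · simpa using h1.trans (hi 0 hi')
    · simpa using hi _ hi'
  · intro i hi'
    simpa using hp i hi'

theorem PSerB.of_per (hlt : L ≤ L') (h1 : PPer X L L') (h2 : PSerB X L') : PSerB X L := by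
  obtain ⟨M, hM, hper, h⟩ := h2
  exact ⟨M, hlt.trans hM, h1.trans hper, h.imp id fun h => ⟨lt_of_le_of_lt hlt h.1, h.2⟩⟩

theorem PSerB.of_ser (hlt : L < L') (h1 : PPer X L L') (h2 : PSer X L') : PSerB X L :=
  ⟨L', hlt.le, h1, Or.inr ⟨hlt, h2⟩⟩

theorem pser_chain (K : ℕ → AddSubgroup G) (a : ℕ) (h0 : K 0 = ⊤)
    (hK : ∀ k < a, K (k + 1) ≤ K k)
    (hs : ∀ k < a, PInj X (K (k + 1)) (K k) ∨ PPer X (K (k + 1)) (K k)) :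
    ∀ k ≤ a, PSer X (K k) ∨ PSerB X (K k) := by
  intro k
  induction k with
  | zero =>
    intro _
    right
    rw [h0]
    exact ⟨⊤, le_rfl, fun x hx h _ => ⟨x, hx, AddSubgroup.mem_top _⟩, Or.inl rfl⟩
  | succ k ih =>
    intro hk
    have ih := ih (by omega)
    rcases (hK k (by omega)).eq_or_lt with he | hlt
    · rwa [he]
    rcases hs k (by omega) with h | h <;> rcases ih with ih | ih
    · exact Or.inl (ih.of_inj hlt.le h)
    · exact Or.inl (PSer.of_B hlt h ih)
    · exact Or.inr (PSerB.of_ser hlt h ih)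
    · exact Or.inr (ih.of_per hlt.le h)

/-- The stabilizer. -/
def PStab (X : Set G) : AddSubgroup G where
  carrier := {g | ∀ x, x + g ∈ X ↔ x ∈ X}
  zero_mem' := by simp
  add_mem' := by
    intro a b ha hb x
    rw [← add_assoc, hb, ha]
  neg_mem' := by
    intro a ha x
    rw [← ha, neg_add_cancel_right]

theorem image_add_iff (X : Set G) (g : G) :
    (fun x => x + g) '' X = X ↔ ∀ x, x + g ∈ X ↔ x ∈ X := by
  constructor
  · intro h x
    conv_lhs => rw [← h]
    simp
  · intro h
    ext y
    simp only [Set.mem_image]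
    constructor
    · rintro ⟨x, hx, rfl⟩; exact (h x).2 hx
    · intro hy; exact ⟨y - g, (h _).1 (by simpa using hy), by simp⟩

theorem pser_stab (hne : X ≠ Set.univ) (hX0 : (0 : G) ∈ X)
    (K : ℕ → AddSubgroup G) (a : ℕ) (h0 : K 0 = ⊤)
    (hK : ∀ k < a, K (k + 1) ≤ K k)
    (hs : ∀ k < a, PInj X (K (k + 1)) (K k) ∨ PPer X (K (k + 1)) (K k))
    (ha : PInj X ⊥ (K a)) : PSer X (PStab X) := by
  have hi : ∀ A B, PInj X A B → PInj X (PStab X ⊔ A) (PStab X ⊔ B) := by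
    intro A B h x hx y hy hxy
    obtain ⟨s, hs, b, hb, e⟩ := AddSubgroup.mem_sup.1 hxy
    have h1 := h x hx (y + s) ((hs y).2 hy) (by
      convert hb using 1
      rw [← sub_sub, ← e]; abel)
    exact AddSubgroup.mem_sup.2 ⟨s, hs, _, h1, by abel⟩
  have hp : ∀ A B, PPer X A B → PPer X (PStab X ⊔ A) (PStab X ⊔ B) := by
    intro A B h x hx b hb'
    obtain ⟨s, hs, b, hb, rfl⟩ := AddSubgroup.mem_sup.1 hb'
    obtain ⟨y, hy, h1⟩ := h (x + s) ((hs x).2 hx) b hb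
    refine ⟨y, hy, AddSubgroup.mem_sup_right ?_⟩
    rwa [← add_assoc]
  have hch := pser_chain (X := X) (fun k => PStab X ⊔ K k) a (by simp [h0])
    (fun k hk => sup_le_sup_left (hK k hk) _)
    (fun k hk => (hs k hk).imp (hi _ _) (hp _ _)) a le_rfl
  have hL : PInj X (PStab X) (PStab X ⊔ K a) := by simpa using hi _ _ ha
  have hle : PStab X ≤ PStab X ⊔ K a := le_sup_left
  rcases hch with h | h
  · exact h.of_inj hle hL
  · rcases hle.eq_or_lt with he | hlt
    · simp only [← he] at h
      obtain ⟨M, hM, hper, h⟩ := h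
      have hst : M ≤ PStab X := by
        have key : ∀ g ∈ M, ∀ x ∈ X, x + g ∈ X := by
          intro g hg x hx
          obtain ⟨y, hy, h1⟩ := hper x hx g hg
          have := (h1 y).2 hy
          simpa using this
        intro g hg x
        refine ⟨fun h => ?_, key g hg x⟩
        have := key (-g) (M.neg_mem hg) _ h
        simpa using this
      rcases h with rfl | ⟨h, _⟩
      · exfalso
        apply hne
        ext x
        have := hst (AddSubgroup.mem_top x) 0
        simpa [hX0] using this
      · exact absurd hst h.not_ge
    · exact PSer.of_B hlt hL h

theorem mk_eq_iff' (H : AddSubgroup G) (x y : G) :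
    (QuotientAddGroup.mk x : G ⧸ H) = QuotientAddGroup.mk y ↔ x - y ∈ H := by
  rw [QuotientAddGroup.eq, ← H.neg_mem_iff]
  congr! 1
  abel

theorem pinj_iff (hX0 : (0 : G) ∈ X) (A B : AddSubgroup G) :
    ((ImageSet A X - ImageSet A X) ∩ ImageSet A (B : Set G) = {0}) ↔ 
      ∀ x ∈ X, ∀ y ∈ X, ∀ b ∈ B, x - y - b ∈ A → x - y ∈ A := by
  constructor
  · intro h x hx y hy b hb hxy
    have : (QuotientAddGroup.mk (x - y) : G ⧸ A) ∈ ({0} : Set (G ⧸ A)) := by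
      rw [← h]
      refine ⟨Set.mem_sub.2 ⟨_, ⟨x, hx, rfl⟩, _, ⟨y, hy, rfl⟩, rfl⟩, b, hb, ?_⟩
      exact ((mk_eq_iff' _ _ _).2 hxy).symm
    exact (QuotientAddGroup.eq_zero_iff _).1 this
  · intro h
    ext z
    simp only [Set.mem_inter_iff, Set.mem_singleton_iff, Set.mem_sub]
    constructor
    · rintro ⟨⟨_, ⟨x, hx, rfl⟩, _, ⟨y, hy, rfl⟩, rfl⟩, b, hb, e⟩
      have := h x hx y hy b hb ((mk_eq_iff' A _ _).1 e.symm)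
      rw [← QuotientAddGroup.mk_sub]
      exact (QuotientAddGroup.eq_zero_iff _).2 this
    · rintro rfl
      exact ⟨⟨_, ⟨0, hX0, rfl⟩, _, ⟨0, hX0, rfl⟩, by simp⟩, 0, B.zero_mem, rfl⟩

theorem pper_iff (A B : AddSubgroup G) :
    PeriodicUnder (ImageSet A X) (ImageSet A (B : Set G)) ↔ PPer X A B := by
  unfold PeriodicUnder
  constructor
  · intro h x hx b hb
    have h1 := h _ ⟨b, hb, rfl⟩
    have : (QuotientAddGroup.mk (x + b) : G ⧸ A) ∈ ImageSet A X := by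
      rw [← h1]
      exact ⟨_, ⟨x, hx, rfl⟩, rfl⟩
    obtain ⟨y, hy, e⟩ := this
    exact ⟨y, hy, (mk_eq_iff' A _ _).1 e.symm⟩
  · rintro h _ ⟨b, hb, rfl⟩
    have key : ∀ b ∈ B, ∀ z ∈ ImageSet A X, z + QuotientAddGroup.mk b ∈ ImageSet A X := by
      rintro b hb _ ⟨x, hx, rfl⟩
      obtain ⟨y, hy, e⟩ := h x hx b hb
      exact ⟨y, hy, ((mk_eq_iff' A _ _).2 e).symm⟩
    rw [image_add_iff]
    intro z
    refine ⟨fun hz => ?_, key b hb z⟩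
    have := key (-b) (B.neg_mem hb) _ hz
    simpa using this

theorem admissible_of_pser (hX0 : (0 : G) ∈ X) (h : PSer X (PStab X)) : IsPyramidal X := by
  obtain ⟨t, H, ht, h0, hs, hle, htop, hi, hp⟩ := h
  refine ⟨hX0, t, H, ht, hs, hle, htop, ?_, ?_, ?_, ?_, ?_⟩
  · by_cases hb : H 0 = ⊥
    · refine Or.inl ⟨hb, fun g hg => ?_⟩
      rw [image_add_iff] at hg
      have : g ∈ PStab X := hg
      rw [← h0, hb] at this
      simpa using this
    · refine Or.inr ⟨hb, fun g hg => ?_⟩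
      rw [image_add_iff]
      rw [h0] at hg
      exact hg
  · intro i hit
    rw [pinj_iff hX0]
    intro x hx y hy b hb hxy
    have hle' : H (2 * i) ≤ H (2 * i + 1) := (hs _ (by omega)).le
    refine hi i hit x hx y hy ?_
    have := add_mem (hle' hxy) hb
    simpa using this
  · intro i h1 hit
    rw [pper_iff]
    have := hp (i - 1) (by omega)
    rwa [show 2 * (i - 1) + 1 = 2 * i - 1 by omega, show 2 * (i - 1) + 2 = 2 * i by omega] at this
  · have := hp (t - 1) (by omega)
    rw [show 2 * (t - 1) + 1 = 2 * t - 1 by omega, show 2 * (t - 1) + 2 = 2 * t by omega, htop]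
      at this
    rw [← Set.ncard_univ]
    congr 1
    ext z
    obtain ⟨g, rfl⟩ := QuotientAddGroup.mk_surjective z
    simp only [Set.mem_univ, iff_true]
    obtain ⟨y, hy, e⟩ := this 0 hX0 g (AddSubgroup.mem_top _)
    exact ⟨y, hy, ((mk_eq_iff' _ _ _).2 (by simpa using e)).symm⟩
  · intro i hit
    have hle' : H (2 * i) ≤ H (2 * i + 1) := (hs _ (by omega)).le
    let f : G ⧸ H (2 * i) →+ G ⧸ H (2 * i + 1) :=
      QuotientAddGroup.map _ _ (AddMonoidHom.id G) hle'
    have e : ImageSet (H (2 * i + 1)) X = f '' ImageSet (H (2 * i)) X := by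
      unfold ImageSet
      rw [Set.image_image]
      rfl
    rw [e, Set.InjOn.ncard_image]
    rintro _ ⟨x, hx, rfl⟩ _ ⟨y, hy, rfl⟩ hxy
    have : (QuotientAddGroup.mk x : G ⧸ H (2 * i + 1)) = QuotientAddGroup.mk y := hxy
    rw [mk_eq_iff'] at this
    exact (mk_eq_iff' _ _ _).2 (hi i hit x hx y hy this)

/-- Tiling modulo `L`. -/
def PTile (X : Set G) (L : AddSubgroup G) : Prop :=
  ∃ D : Set G, (∀ d ∈ D, ∀ h ∈ L, d + h ∈ D) ∧ (∀ g, ∃ x ∈ X, g - x ∈ D) ∧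
    ∀ x ∈ X, ∀ x' ∈ X, ∀ d ∈ D, ∀ d' ∈ D, x + d = x' + d' → x - x' ∈ L

theorem PTile.of_inj (hle : L ≤ L') (h1 : PInj X L L') (h2 : PTile X L') : PTile X L := by
  obtain ⟨D, h, h', h''⟩ := h2
  exact ⟨D, fun d hd g hg => h d hd g (hle hg), h',
    fun x hx x' hx' d hd d' hd' e => h1 x hx x' hx' (h'' x hx x' hx' d hd d' hd' e)⟩

theorem PTile.of_per (hle : L ≤ L') (h1 : PPer X L L') (h2 : PTile X L') : PTile X L := by
  obtain ⟨D, h, h', h''⟩ := h2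
  let s : G → G := fun g => (QuotientAddGroup.mk g : G ⧸ L').out
  have hs : ∀ g g', g - g' ∈ L' → s g = s g' := by
    intro g g' hg
    simp only [s]
    rw [(mk_eq_iff' L' g g').2 hg]
  have hs' : ∀ g, g - s g ∈ L' := by
    intro g
    rw [← mk_eq_iff']
    simp [s]
  refine ⟨{d | d ∈ D ∧ d - s d ∈ L}, ?_, ?_, ?_⟩
  · rintro d ⟨hd, hd'⟩ g hg
    refine ⟨h d hd g (hle hg), ?_⟩
    rw [hs (d + g) d (by simpa using hle hg)]
    have := add_mem hd' hg
    convert this using 1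
    abel
  · intro g
    obtain ⟨x, hx, hd⟩ := h' g
    obtain ⟨y, hy, hy'⟩ := h1 x hx _ (hs' (g - x))
    have e : g - y = (g - x) + (-(g - x - s (g - x)) + (x + (g - x - s (g - x)) - y)) := by abel
    have hm : (-(g - x - s (g - x)) + (x + (g - x - s (g - x)) - y)) ∈ L' :=
      add_mem (neg_mem (hs' _)) (hle hy')
    refine ⟨y, hy, ?_, ?_⟩
    · rw [e]
      exact h _ hd _ hm
    · rw [hs (g - y) (g - x) (by rw [e]; simpa using hm)]
      convert hy' using 1
      abel
  · rintro x hx x' hx' d ⟨hd, hdL⟩ d' ⟨hd', hdL'⟩ e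
    have hxx := h'' x hx x' hx' d hd d' hd' e
    have e1 : d' - d = x - x' := by
      rw [sub_eq_sub_iff_add_eq_add, add_comm, ← e]
    have e2 : s d' = s d := hs _ _ (by rwa [e1])
    rw [← e1]
    rw [e2] at hdL'
    have := sub_mem hdL' hdL
    simpa using this

theorem ptile_of_pyramidal (h : IsPyramidal X) : PTile X ⊥ := by
  obtain ⟨hX0, t, H, ht, hs, hle, htop, h0, hi, hp, -, -⟩ := h
  have hall : ∀ i ≤ t, PTile X (H (2 * (t - i))) := by
    intro i
    induction i with
    | zero =>
      intro _
      simp only [Nat.sub_zero]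
      rw [htop]
      exact ⟨Set.univ, by simp, fun g => ⟨0, hX0, trivial⟩, by simp⟩
    | succ i ih =>
      intro hit
      have ih := ih (by omega)
      obtain ⟨j, hj⟩ : ∃ j, j = t - (i + 1) := ⟨_, rfl⟩
      have hj' : t - i = j + 1 := by omega
      rw [← hj]
      rw [hj'] at ih
      have hle1 : H (2 * j) ≤ H (2 * j + 1) := (hs _ (by omega)).le
      have hle2 : H (2 * j + 1) ≤ H (2 * (j + 1)) := by
        by_cases hjt : j + 1 = t
        · rw [← hjt] at hle
          exact hle
        · exact (hs _ (by omega)).le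
      have hper := (pper_iff _ _).1 (hp (j + 1) (by omega) (by omega))
      have hinj := (pinj_iff hX0 _ _).1 (hi j (by omega))
      refine (ih.of_per hle2 hper).of_inj hle1 ?_
      intro x hx y hy hxy
      exact hinj x hx y hy _ hxy (by simp)
  have hfin := hall t le_rfl
  rw [Nat.sub_self] at hfin
  rcases h0 with ⟨hb, -⟩ | ⟨-, hper⟩
  · rwa [← hb]
  · refine hfin.of_per bot_le ?_
    intro x hx g hg
    have := (image_add_iff X g).1 (hper g hg) x
    exact ⟨x + g, this.2 hx, by simp⟩

end series

section cyclo
open Polynomial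

/-- Mask polynomial. -/
noncomputable def maskPoly {n : ℕ} (Y : Finset (ZMod n)) : ℤ[X] := ∑ y ∈ Y, X ^ y.val

theorem maskPoly_aeval {n : ℕ} (Y : Finset (ZMod n)) (z : ℂ) :
    aeval z (maskPoly Y) = ∑ y ∈ Y, z ^ y.val := by
  simp [maskPoly]

theorem cyclo_dvd_iff {N : ℕ} (hN : 0 < N) {z : ℂ} (hz : IsPrimitiveRoot z N) (A : ℤ[X]) :
    cyclotomic N ℤ ∣ A ↔ aeval z A = 0 := by
  rw [cyclotomic_eq_minpoly hz hN, minpoly.isIntegrallyClosed_dvd_iff (hz.isIntegral hN)]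

theorem prod_cyclo_dvd {p : ℕ} (hp : p.Prime) (A : ℤ[X]) (J : Finset ℕ)
    (h : ∀ k ∈ J, cyclotomic (p ^ (k + 1)) ℤ ∣ A) :
    ∏ k ∈ J, cyclotomic (p ^ (k + 1)) ℤ ∣ A := by
  induction J using Finset.induction_on with
  | empty => simp
  | insert k J hk ih =>
    rw [Finset.prod_insert hk]
    obtain ⟨Q, hQ⟩ := ih fun j hj => h j (Finset.mem_insert_of_mem hj)
    have hpos : ∀ j, 0 < p ^ j := fun j => Nat.pow_pos hp.pos
    have hprime : Prime (cyclotomic (p ^ (k + 1)) ℤ) :=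
      (cyclotomic.irreducible (hpos _)).prime
    have hd := h k (Finset.mem_insert_self _ _)
    rw [hQ] at hd
    rcases hprime.dvd_or_dvd hd with h1 | h1
    · exfalso
      obtain ⟨j, hj, hjd⟩ := (hprime.dvd_finsetProd_iff _).1 h1
      have hz := Complex.isPrimitiveRoot_exp (p ^ (k + 1)) (hpos _).ne'
      rw [cyclo_dvd_iff (hpos _) hz] at hjd
      have hroot : IsRoot (cyclotomic (p ^ (j + 1)) ℂ) (Complex.exp (2 * Real.pi * Complex.I / ↑(p ^ (k + 1)))) := by
        rw [← map_cyclotomic_int, IsRoot.def, eval_map]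
        simpa [aeval_def] using hjd
      haveI : NeZero ((p ^ (j + 1) : ℕ) : ℂ) := ⟨by exact_mod_cast (hpos _).ne'⟩
      rw [isRoot_cyclotomic_iff] at hroot
      have := Nat.pow_right_injective hp.two_le (hroot.unique hz)
      have : j = k := by omega
      exact hk (this ▸ hj)
    · rw [hQ, mul_comm]
      exact mul_dvd_mul_left _ h1

theorem pow_card_dvd {p n : ℕ} (hp : p.Prime) (D : Finset (ZMod n)) (J : Finset ℕ)
    (h : ∀ k ∈ J, cyclotomic (p ^ (k + 1)) ℤ ∣ maskPoly D) : p ^ J.card ∣ D.card := by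
  haveI := Fact.mk hp
  have h1 := eval_dvd (x := (1 : ℤ)) (prod_cyclo_dvd hp _ J h)
  rw [eval_prod] at h1
  simp only [eval_one_cyclotomic_prime_pow, Finset.prod_const, maskPoly, eval_finsetSum, eval_pow,
    eval_X, one_pow, Finset.sum_const, nsmul_eq_mul, mul_one] at h1
  exact_mod_cast h1

theorem sum_root {N : ℕ} {z : ℂ} (hz : IsPrimitiveRoot z N) (y : ℕ) :
    ∑ j ∈ Finset.range N, (z ^ j) ^ y = if N ∣ y then (N : ℂ) else 0 := by
  have e : ∀ j, (z ^ j) ^ y = (z ^ y) ^ j := fun j => by rw [← pow_mul, ← pow_mul, mul_comm]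
  simp only [e]
  split_ifs with h
  · rw [(hz.pow_eq_one_iff_dvd y).2 h]; simp
  · rw [geom_sum_eq (fun h' => h ((hz.pow_eq_one_iff_dvd y).1 h'))]
    rw [← pow_mul, mul_comm, pow_mul, hz.pow_eq_one]; simp

theorem equidist {p n : ℕ} (hp : p.Prime) (Y : Finset (ZMod n)) (k : ℕ)
    (h : cyclotomic (p ^ (k + 1)) ℤ ∣ maskPoly Y) (c : ℕ) :
    p * (Y.filter fun y => p ^ (k + 1) ∣ y.val + c).card =
      (Y.filter fun y => p ^ k ∣ y.val + c).card := by
  have hpos : ∀ j, 0 < p ^ j := fun j => Nat.pow_pos hp.pos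
  have hz := Complex.isPrimitiveRoot_exp (p ^ (k + 1)) (hpos _).ne'
  set z := Complex.exp (2 * Real.pi * Complex.I / ↑(p ^ (k + 1)))
  have hzp : IsPrimitiveRoot (z ^ p) (p ^ k) := hz.pow (hpos _) (by ring)
  have hS : ∑ j ∈ (Finset.range (p ^ (k + 1))).filter (fun j => ¬ p ∣ j),
      ∑ y ∈ Y, (z ^ j) ^ (y.val + c) = 0 := by
    apply Finset.sum_eq_zero
    intro j hj
    have hj' := (Finset.mem_filter.1 hj).2
    have hzj : IsPrimitiveRoot (z ^ j) (p ^ (k + 1)) :=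
      hz.pow_of_coprime j (((Nat.Prime.coprime_iff_not_dvd hp).2 hj').symm.pow_right _)
    have := (cyclo_dvd_iff (hpos _) hzj _).1 h
    rw [maskPoly_aeval] at this
    simp only [pow_add, ← Finset.sum_mul]
    rw [this, zero_mul]
  rw [Finset.sum_comm] at hS
  have hin : ∀ y : ℕ, ∑ j ∈ (Finset.range (p ^ (k + 1))).filter (fun j => ¬ p ∣ j), (z ^ j) ^ y
      = (if p ^ (k + 1) ∣ y then ((p ^ (k + 1) : ℕ) : ℂ) else 0) -
        (if p ^ k ∣ y then ((p ^ k : ℕ) : ℂ) else 0) := by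
    intro y
    rw [← sum_root hz, ← sum_root hzp, eq_sub_iff_add_eq]
    rw [← Finset.sum_filter_add_sum_filter_not (Finset.range (p ^ (k + 1))) (fun j => p ∣ j), add_comm]
    congr 1
    refine Finset.sum_bij (fun i _ => p * i) ?_ ?_ ?_ ?_
    · intro i hi
      simp only [Finset.mem_filter, Finset.mem_range, dvd_mul_right, and_true] at hi ⊢
      rw [pow_succ, mul_comm]
      exact Nat.mul_lt_mul_of_pos_right hi hp.pos
    · intro i _ j _ hij
      exact Nat.eq_of_mul_eq_mul_left hp.pos hij
    · intro b hb
      simp only [Finset.mem_filter, Finset.mem_range] at hb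
      obtain ⟨hb, i, rfl⟩ := hb
      refine ⟨i, ?_, rfl⟩
      rw [pow_succ, mul_comm] at hb
      exact Finset.mem_range.2 (Nat.lt_of_mul_lt_mul_right hb)
    · intro i _
      rw [← pow_mul z p i]
  simp only [hin] at hS
  rw [Finset.sum_sub_distrib, ← Finset.sum_filter, ← Finset.sum_filter, sub_eq_zero] at hS
  simp only [Finset.sum_const, nsmul_eq_mul] at hS
  have hS' : (Y.filter fun y => p ^ (k + 1) ∣ y.val + c).card * p ^ (k + 1) =
      (Y.filter fun y => p ^ k ∣ y.val + c).card * p ^ k := by exact_mod_cast hS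
  apply Nat.eq_of_mul_eq_mul_right (hpos k)
  rw [← hS']; ring

/-- The subgroup `p^k ℤ_n`. -/
def PK (n p k : ℕ) : AddSubgroup (ZMod n) := AddSubgroup.zmultiples ((p ^ k : ℕ) : ZMod n)

theorem mem_PK {n p k : ℕ} [NeZero n] (h : p ^ k ∣ n) (x : ZMod n) :
    x ∈ PK n p k ↔ p ^ k ∣ x.val := by
  unfold PK
  rw [AddSubgroup.mem_zmultiples_iff]
  constructor
  · rintro ⟨i, rfl⟩
    obtain ⟨j, hj⟩ : ∃ j : ℕ, ((j : ℕ) : ZMod n) = (i : ZMod n) := ⟨(i : ZMod n).val, by simp⟩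
    have : (i • ((p ^ k : ℕ) : ZMod n)) = ((j * p ^ k : ℕ) : ZMod n) := by
      rw [zsmul_eq_mul, ← hj]; push_cast; ring
    rw [this, ZMod.val_natCast, Nat.dvd_mod_iff h]
    exact dvd_mul_left _ _
  · rintro ⟨j, hj⟩
    refine ⟨j, ?_⟩
    have : x = ((x.val : ℕ) : ZMod n) := by simp
    rw [this, hj]; push_cast; rw [zsmul_eq_mul]; push_cast; ring

theorem mem_PK_sub {n p k : ℕ} [NeZero n] (h : p ^ k ∣ n) (x c : ZMod n) :
    x - c ∈ PK n p k ↔ p ^ k ∣ x.val + (-c).val := by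
  rw [mem_PK h, sub_eq_add_neg, ZMod.val_add, Nat.dvd_mod_iff h]

theorem tile_sum {n : ℕ} {M : Type*} [AddCommMonoid M] [NeZero n] (Y D : Finset (ZMod n))
    (h : IsCayleyPerfectCode (Y : Set (ZMod n)) (D : Set (ZMod n))) (f : ZMod n → M) :
    ∑ y ∈ Y, ∑ d ∈ D, f (y + d) = ∑ g, f g := by
  rw [← Finset.sum_product']
  refine Finset.sum_bij (fun sd _ => sd.1 + sd.2) (by simp) ?_ ?_ (by simp)
  · rintro a ha b hb e
    rw [Finset.mem_product] at ha hb
    exact (h (a.1 + a.2)).unique ⟨ha.1, ha.2, rfl⟩ ⟨hb.1, hb.2, e.symm⟩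
  · intro g _
    obtain ⟨sd, hsd, -⟩ := h g
    exact ⟨sd, Finset.mem_product.2 ⟨hsd.1, hsd.2.1⟩, hsd.2.2⟩

theorem main_chain {n p ℓ : ℕ} [NeZero n] (hp : p.Prime) (Y D : Finset (ZMod n))
    (hY : Y.card = p ^ ℓ)
    (h : IsCayleyPerfectCode (Y : Set (ZMod n)) (D : Set (ZMod n))) :
    ∃ a, (∀ k < a, PK n p (k + 1) ≤ PK n p k) ∧
      (∀ k < a, PInj (Y : Set (ZMod n)) (PK n p (k + 1)) (PK n p k) ∨
        PPer (Y : Set (ZMod n)) (PK n p (k + 1)) (PK n p k)) ∧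
      PInj (Y : Set (ZMod n)) ⊥ (PK n p a) := by
  classical
  have hn0 : n ≠ 0 := NeZero.ne n
  have hpos : ∀ j, 0 < p ^ j := fun j => Nat.pow_pos hp.pos
  set a := n.factorization p with ha
  have hdvd : ∀ k ≤ a, p ^ k ∣ n := fun k hk => (hp.pow_dvd_iff_le_factorization hn0).2 hk
  have hcard : p ^ ℓ * D.card = n := by
    have := tile_sum Y D h (fun _ => (1 : ℕ))
    simpa [hY] using this
  have hor : ∀ k < a, cyclotomic (p ^ (k + 1)) ℤ ∣ maskPoly Y ∨
      cyclotomic (p ^ (k + 1)) ℤ ∣ maskPoly D := by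
    intro k hk
    have hz := Complex.isPrimitiveRoot_exp (p ^ (k + 1)) (hpos _).ne'
    rw [cyclo_dvd_iff (hpos _) hz, cyclo_dvd_iff (hpos _) hz, ← mul_eq_zero, maskPoly_aeval,
      maskPoly_aeval]
    set z := Complex.exp (2 * Real.pi * Complex.I / ↑(p ^ (k + 1)))
    have hzn : z ^ n = 1 := (hz.pow_eq_one_iff_dvd n).2 (hdvd _ hk)
    have hz1 : z ≠ 1 := by
      intro h1
      have := (hz.pow_eq_one_iff_dvd 1).1 (by simpa using h1)
      have h2 := Nat.one_lt_pow (n := k + 1) (by omega) hp.one_lt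
      have := Nat.le_of_dvd one_pos this
      omega
    have hmul : ∀ y d : ZMod n, z ^ y.val * z ^ d.val = z ^ (y + d).val := by
      intro y d
      rw [← pow_add, ZMod.val_add, ← pow_eq_pow_mod _ hzn]
    rw [Finset.sum_mul_sum]
    simp only [hmul]
    rw [tile_sum Y D h (fun g => z ^ g.val)]
    have : ∑ g : ZMod n, z ^ g.val = ∑ i ∈ Finset.range n, z ^ i := by
      refine Finset.sum_bij (fun g _ => g.val) ?_ ?_ ?_ ?_
      · intro g _; exact Finset.mem_range.2 (ZMod.val_lt g)
      · intro g _ g' _ e; exact ZMod.val_injective n e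
      · intro i hi; exact ⟨i, by simp, ZMod.val_cast_of_lt (Finset.mem_range.1 hi)⟩
      · intro g _; rfl
    rw [this, geom_sum_eq hz1, hzn]; simp
  let P : ℕ → Prop := fun k => cyclotomic (p ^ (k + 1)) ℤ ∣ maskPoly Y
  let J : ℕ → Finset ℕ := fun k => (Finset.range k).filter P
  have hJ : ℓ ≤ (J a).card := by
    have h1 := pow_card_dvd hp D ((Finset.range a).filter fun k => ¬ P k) (by
      intro k hk
      simp only [Finset.mem_filter, Finset.mem_range] at hk
      exact (hor k hk.1).resolve_left hk.2)
    have h2 : p ^ (ℓ + ((Finset.range a).filter fun k => ¬ P k).card) ∣ n := by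
      rw [pow_add]
      conv_rhs => rw [← hcard]
      exact mul_dvd_mul_left _ h1
    rw [hp.pow_dvd_iff_le_factorization hn0, ← ha] at h2
    have h3 := Finset.card_filter_add_card_filter_not (s := Finset.range a) P
    rw [Finset.card_range] at h3
    simp only [J]
    omega
  let F : ℕ → ZMod n → Finset (ZMod n) := fun k c => Y.filter fun y => p ^ k ∣ y.val + (-c).val
  have hFmem : ∀ k ≤ a, ∀ c x, x ∈ F k c ↔ x ∈ Y ∧ x - c ∈ PK n p k := by
    intro k hk c x
    simp only [F, Finset.mem_filter, mem_PK_sub (hdvd k hk)]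
  have hFsub : ∀ k c, F (k + 1) c ⊆ F k c := by
    intro k c x hx
    simp only [F, Finset.mem_filter] at hx ⊢
    exact ⟨hx.1, (pow_dvd_pow p (Nat.le_succ k)).trans hx.2⟩
  have hF0 : ∀ c, (F 0 c).card = p ^ ℓ := by
    intro c
    simp [F, hY]
  have hJs : ∀ k, P k → (J (k + 1)).card = (J k).card + 1 := by
    intro k hk
    simp [J, Finset.range_add_one, Finset.filter_insert, hk]
  have hJn : ∀ k, ¬ P k → (J (k + 1)).card = (J k).card := by
    intro k hk
    simp [J, Finset.range_add_one, Finset.filter_insert, hk]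
  have heq : ∀ k, P k → ∀ c, p * (F (k + 1) c).card = (F k c).card := by
    intro k hk c
    exact equidist hp Y k hk _
  let f : ZMod n → ℕ → ℕ := fun c k => (F k c).card * p ^ (J k).card
  have hanti : ∀ c, Antitone (f c) := by
    intro c
    refine antitone_nat_of_succ_le fun k => ?_
    by_cases hk : P k
    · simp only [f]
      rw [hJs k hk, ← heq k hk c, pow_succ]
      apply le_of_eq; ring
    · simp only [f]
      rw [hJn k hk]
      exact Nat.mul_le_mul_right _ (Finset.card_le_card (hFsub k c))
  have hf0 : ∀ c, f c 0 = p ^ ℓ := by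
    intro c; simp only [f]; rw [hF0]; simp [J]
  have hself : ∀ c ∈ Y, c ∈ F a c := by
    intro c hc
    rw [hFmem a le_rfl]
    exact ⟨hc, by simp⟩
  have hpJ : p ^ ℓ ≤ p ^ (J a).card := Nat.pow_le_pow_right hp.pos hJ
  have hcpos : ∀ c ∈ Y, 1 ≤ (F a c).card := fun c hc => Finset.card_pos.2 ⟨c, hself c hc⟩
  have hfa : ∀ c ∈ Y, p ^ ℓ ≤ f c a := by
    intro c hc
    exact hpJ.trans (Nat.le_mul_of_pos_left _ (hcpos c hc))
  have hfk : ∀ c ∈ Y, ∀ k ≤ a, f c k = p ^ ℓ := by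
    intro c hc k hk
    apply le_antisymm
    · rw [← hf0 c]; exact hanti c (Nat.zero_le k)
    · exact (hfa c hc).trans (hanti c hk)
  refine ⟨a, ?_, ?_, ?_⟩
  · intro k hk x hx
    rw [mem_PK (hdvd _ (by omega))] at hx ⊢
    exact (pow_dvd_pow p (Nat.le_succ k)).trans hx
  · intro k hk
    by_cases hPk : P k
    · right
      intro x hx g hg
      have h1 : x ∈ F k (x + g) := by
        rw [hFmem k hk.le]
        exact ⟨hx, by simpa using hg⟩
      have h2 : 0 < p * (F (k + 1) (x + g)).card := by
        rw [heq k hPk]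
        exact Finset.card_pos.2 ⟨x, h1⟩
      obtain ⟨y, hy⟩ := Finset.card_pos.1 (Nat.pos_of_mul_pos_left h2)
      rw [hFmem _ hk] at hy
      exact ⟨y, hy.1, by rw [← neg_mem_iff]; simpa using hy.2⟩
    · left
      intro x hx y hy hxy
      have e1 := hfk y hy k hk.le
      rw [← hfk y hy (k + 1) hk] at e1
      simp only [f] at e1
      rw [hJn k hPk] at e1
      have e2 := Nat.eq_of_mul_eq_mul_right (hpos _) e1
      have e3 := Finset.eq_of_subset_of_card_le (hFsub k y) e2.le
      have : x ∈ F k y := (hFmem k hk.le y x).2 ⟨hx, hxy⟩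
      rw [← e3] at this
      exact ((hFmem _ hk y x).1 this).2
  · intro x hx y hy hxy
    have e1 := hfk y hy a le_rfl
    simp only [f] at e1
    have e2 : (F a y).card ≤ 1 := by
      by_contra hcon
      have : 2 * p ^ (J a).card ≤ (F a y).card * p ^ (J a).card :=
        Nat.mul_le_mul_right _ (by omega)
      have := hpos ℓ
      omega
    have := Finset.card_le_one.1 e2 x ((hFmem a le_rfl y x).2 ⟨hx, hxy⟩) y (hself y hy)
    simp [this]

end cyclo

theorem stmt_10 (n p ℓ m : ℕ) (hp : p.Prime) (hl : 1 ≤ ℓ) (hm : 2 ≤ m)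
    (hn : n = p ^ ℓ * m) (S : Finset (ZMod n))
    (h0 : (0 : ZMod n) ∉ S) (hsym : ∀ s ∈ S, -s ∈ S)
    (hdeg : S.card = p ^ ℓ - 1)
    (hconn : AddSubgroup.closure (S : Set (ZMod n)) = ⊤)
    (hnoncomplete : insert (0 : ZMod n) (S : Set (ZMod n)) ≠ Set.univ) :
    (∃ D : Set (ZMod n),
        IsCayleyPerfectCode (insert (0 : ZMod n) (S : Set (ZMod n))) D) ↔
      (p ^ ℓ ∣ n ∧ IsPyramidal (insert (0 : ZMod n) (S : Set (ZMod n)))) := by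
  classical
  have hpos : 0 < p ^ ℓ := Nat.pow_pos hp.pos
  have hn0 : n ≠ 0 := by
    rw [hn]; exact Nat.mul_ne_zero hpos.ne' (by omega)
  haveI : NeZero n := ⟨hn0⟩
  constructor
  · rintro ⟨D, hD⟩
    refine ⟨⟨m, hn⟩, ?_⟩
    have hc : (insert (0 : ZMod n) S).card = p ^ ℓ := by
      rw [Finset.card_insert_of_notMem h0, hdeg]; omega
    obtain ⟨a, h1, h2, h3⟩ := main_chain hp (insert (0 : ZMod n) S) D.toFinite.toFinset hc
      (by simpa using hD)
    rw [Finset.coe_insert] at h2 h3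
    refine admissible_of_pser (Set.mem_insert _ _) ?_
    refine pser_stab hnoncomplete (Set.mem_insert _ _) (PK n p) a ?_ h1 h2 h3
    rw [eq_top_iff]
    intro x _
    rw [mem_PK (by simp)]
    simp
  · rintro ⟨-, h⟩
    obtain ⟨D, -, h1, h2⟩ := ptile_of_pyramidal h
    refine ⟨D, fun g => ?_⟩
    obtain ⟨x, hx, hd⟩ := h1 g
    refine ⟨(x, g - x), ⟨hx, hd, by simp⟩, ?_⟩
    rintro ⟨x', d'⟩ ⟨hx', hd', e⟩
    simp only at hx' hd' e
    have := h2 x' hx' x hx d' hd' (g - x) hd (by rw [e]; simp)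
    rw [AddSubgroup.mem_bot, sub_eq_zero] at this
    subst this
    rw [← e]; simp
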